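/- Let d ≥ 11 and let 𝐯 be a recurrent balanced sequence over an alphabet of d letters with critical exponent E(𝐯) = (d−1)/(d−2). Then every letter of 𝐯 has a well-defined frequency, and the maximum letter frequency ρ = max_a ρ_a(𝐯) satisfies 1/(d−1) < ρ < 1/(d−2). -/

import Mathlib

open Filter
open scoped ENNReal

namespace BalancedCE

variable {α : Type*} {β : Type*}

/-- The factor of `v` of length `n` starting at position `i`. -/
def factorAt (v : ℕ → α) (i n : ℕ) : List α := (List.range n).map fun k => v (i + k)

/-- `u` is a factor of the sequence `v`. -/
def IsFactor (v : ℕ → α) (u : List α) : Prop := ∃ i, factorAt v i u.length = u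

/-- The word `w` occurs in the sequence `v` at position `i`. -/
def OccursAt (v : ℕ → α) (w : List α) (i : ℕ) : Prop := factorAt v i w.length = w

/-- A sequence is balanced if counts of each letter in equal-length factors differ by at most 1. -/
def Balanced [DecidableEq α] (v : ℕ → α) : Prop :=
  ∀ (a : α) (u w : List α), IsFactor v u → IsFactor v w → u.length = w.length →
    |(u.count a : ℤ) - (w.count a : ℤ)| ≤ 1

def EventuallyPeriodic (v : ℕ → α) : Prop :=
  ∃ p, 0 < p ∧ ∃ N, ∀ n, N ≤ n → v (n + p) = v n

def Recurrent (v : ℕ → α) : Prop :=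
  ∀ u : List α, IsFactor v u → ∀ N : ℕ, ∃ i, N ≤ i ∧ OccursAt v u i

/-- `i < j` are consecutive occurrences of the letter `a` in `v`. -/
def ConsecOcc (v : ℕ → α) (a : α) (i j : ℕ) : Prop :=
  i < j ∧ v i = a ∧ v j = a ∧ ∀ k, i < k → k < j → v k ≠ a

/-- `p` is a period of the finite word `z` (i.e. `z` is a prefix of `u^ω` with `|u| = p`). -/
def IsPeriod (z : List α) (p : ℕ) : Prop :=
  0 < p ∧ ∀ i, i + p < z.length → z[i]? = z[i + p]?

/-- The minimal period of a finite word. -/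
noncomputable def minPeriod (z : List α) : ℕ := sInf {p | IsPeriod z p}

/-- The exponent of a finite word: its length divided by its minimal period. -/
noncomputable def expE (z : List α) : ℝ≥0∞ := (z.length : ℝ≥0∞) / (minPeriod z : ℝ≥0∞)

/-- The critical exponent of a sequence: the supremum of exponents of nonempty factors. -/
noncomputable def criticalExponent (v : ℕ → α) : ℝ≥0∞ :=
  ⨆ (z : List α) (_ : IsFactor v z ∧ z ≠ []), expE z

/-- A Pansiot sequence over a `d`-letter alphabet. -/
def Pansiot (d : ℕ) (v : ℕ → α) : Prop :=
  (∀ i : ℕ, (factorAt v i (d - 1)).Nodup) ∧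
  ∀ (a : α) (i j : ℕ), ConsecOcc v a i j → v (i + 1) ≠ v (j + 1)

/-- The letter `a` has frequency `ρ` in the sequence `v`. -/
def HasFreq [DecidableEq α] (v : ℕ → α) (a : α) (ρ : ℝ) : Prop :=
  Tendsto (fun n => ((factorAt v 0 n).count a : ℝ) / n) atTop (nhds ρ)

/-- Factor complexity of a sequence. -/
noncomputable def complexity (v : ℕ → α) (n : ℕ) : ℕ :=
  Set.ncard {u : List α | IsFactor v u ∧ u.length = n}

/-- Sturmian sequences: aperiodic binary sequences of factor complexity `n + 1`.
Convention: the letter `a` is `false`, the letter `b` is `true`. -/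
def Sturmian (u : ℕ → Bool) : Prop :=
  ¬ EventuallyPeriodic u ∧ ∀ n, complexity u n = n + 1

/-- Prepending a letter to a sequence. -/
def consSeq (c : α) (v : ℕ → α) : ℕ → α := fun n =>
  match n with
  | 0 => c
  | Nat.succ m => v m

/-- A standard sequence: a Sturmian sequence `u` such that `a·u` and `b·u` are Sturmian. -/
def IsStandard (u : ℕ → Bool) : Prop :=
  Sturmian u ∧ Sturmian (consSeq false u) ∧ Sturmian (consSeq true u)

/-- The slope of a binary sequence, with the convention `ρ_b > ρ_a` (`a = false`, `b = true`). -/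
def HasSlope (u : ℕ → Bool) (θ : ℝ) : Prop :=
  ∃ ρa ρb : ℝ, HasFreq u false ρa ∧ HasFreq u true ρb ∧ ρa < ρb ∧ θ = ρa / ρb

/-- `θ` has the (infinite) continued fraction expansion `[0; a 1, a 2, a 3, …]`:
there are complete quotients' fractional parts `t n ∈ (0,1)` with `t 0 = θ` and
`1 / t n = a (n+1) + t (n+1)` for all `n`. (The value `a 0` is irrelevant.) -/
def HasCF (θ : ℝ) (a : ℕ → ℕ) : Prop :=
  ∃ t : ℕ → ℝ, t 0 = θ ∧ ∀ n, 0 < t n ∧ t n < 1 ∧ 1 / t n = (a (n + 1) : ℝ) + t (n + 1)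

/-- Number of positions `< n` where `u` takes the value `c`. -/
def countBefore (u : ℕ → Bool) (c : Bool) (n : ℕ) : ℕ :=
  ((List.range n).filter fun i => u i = c).length

/-- The colouring of a binary sequence `u` by `y` (on the `a = false` positions)
and `y'` (on the `b = true` positions). -/
def colour (u : ℕ → Bool) (y : ℕ → α) (y' : ℕ → β) : ℕ → α ⊕ β := fun n =>
  if u n = false then Sum.inl (y (countBefore u false n))
  else Sum.inr (y' (countBefore u true n))

/-- A constant gap sequence: periodic, and consecutive occurrences of each occurring
letter are at a constant distance. -/
def ConstantGap (y : ℕ → α) : Prop :=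
  (∃ p, 0 < p ∧ ∀ n, y (n + p) = y n) ∧
  ∀ c : α, (∃ i, y i = c) → ∃ g, 0 < g ∧ ∀ i j, ConsecOcc y c i j → j - i = g

/-- The discolouration (projection) map: letters of the first alphabet go to `a = false`,
letters of the second alphabet go to `b = true`. -/
def proj : α ⊕ β → Bool := Sum.elim (fun _ => false) (fun _ => true)

/-- `v` is a return word to `w` in the sequence `z`. -/
def IsReturnWord (z : ℕ → α) (w v : List α) : Prop :=
  ∃ i j : ℕ, i < j ∧ OccursAt z w i ∧ OccursAt z w j ∧
    (∀ k, i < k → k < j → ¬ OccursAt z w k) ∧ v = factorAt z i (j - i)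

def RightSpecial (z : ℕ → α) (w : List α) : Prop :=
  ∃ a b : α, a ≠ b ∧ IsFactor z (w ++ [a]) ∧ IsFactor z (w ++ [b])

def LeftSpecial (z : ℕ → α) (w : List α) : Prop :=
  ∃ a b : α, a ≠ b ∧ IsFactor z (a :: w) ∧ IsFactor z (b :: w)

def Bispecial (z : ℕ → α) (w : List α) : Prop := LeftSpecial z w ∧ RightSpecial z w

/-- `o` enumerates, in increasing order, all occurrences of `w` in `z`. -/
def IsOccEnum (z : ℕ → α) (w : List α) (o : ℕ → ℕ) : Prop :=
  StrictMono o ∧ (∀ n, OccursAt z w (o n)) ∧ ∀ i, OccursAt z w i → ∃ n, o n = i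

/-- The derived sequence of `z` with respect to the occurrence enumeration `o` of a factor:
its `n`-th letter is the return word between the `n`-th and `(n+1)`-st occurrences. -/
def derivedSeq (z : ℕ → α) (o : ℕ → ℕ) : ℕ → List α :=
  fun n => factorAt z (o n) (o (n + 1) - o n)

/-- The slope of a sequence over a two-letter alphabet:
the ratio of the smaller letter frequency to the larger one. -/
def HasSlope2 {γ : Type*} [DecidableEq γ] (z : ℕ → γ) (θ : ℝ) : Prop :=
  ∃ (c c' : γ) (ρ ρ' : ℝ), c ≠ c' ∧ (∀ n, z n = c ∨ z n = c') ∧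
    HasFreq z c ρ ∧ HasFreq z c' ρ' ∧ ρ < ρ' ∧ θ = ρ / ρ'

/-- The purely cyclic constant gap sequence `(0 1 ⋯ (δ-1))^ω` over `ZMod δ`. -/
def cyc (δ : ℕ) : ℕ → ZMod δ := fun n => (n : ZMod δ)

/-- The colouring `colour(u, (1 2 ⋯ δ)^ω, (1' 2' ⋯ δ')^ω)` over `2δ` letters. -/
def colourCyc (δ : ℕ) (u : ℕ → Bool) : ℕ → ZMod δ ⊕ ZMod δ := colour u (cyc δ) (cyc δ)

/-! If one letter has rational frequency, balance and recurrence make its set of positions purely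
periodic; the letters met along the resulting arithmetic progression then force every other
frequency to be rational, so the whole sequence is purely periodic and its critical exponent is
infinite. Hence all nonzero frequencies are irrational and no letter fills an arithmetic
progression.

With `k = d - 2`, the bound `E ≤ (k + 1) / k` says that a factor of length `m` can reappear at
distance `p` only if `m * k ≤ p`. For `m = 1`, two occurrences of a letter are at distance at least
`k`, so every frequency is at most `1 / k`. If all frequencies were at most `1 / (k + 1)`, then by
irrationality all distances would be at least `D = k + 1`, and the sequence would be a Pansiot
sequence. Then every letter returns after `D`, `D + 1` or `D + 2` steps, a balanced sequence does
not allow the returns `D` and `D + 2` for the same letter, and following the return times along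
the sequence produces a letter on an arithmetic progression of difference `D` or `D + 2`. -/

section Words

variable {v : ℕ → α} {a : α}

lemma length_factorAt (v : ℕ → α) (i n : ℕ) : (factorAt v i n).length = n := by
  simp [factorAt]

lemma isFactor_factorAt (v : ℕ → α) (i n : ℕ) : IsFactor v (factorAt v i n) :=
  ⟨i, by rw [length_factorAt]⟩

lemma factorAt_add (v : ℕ → α) (i m n : ℕ) :
    factorAt v i (m + n) = factorAt v i m ++ factorAt v (i + m) n := by
  simp [factorAt, List.range_add, add_assoc]

lemma mem_factorAt {i n : ℕ} : a ∈ factorAt v i n ↔ ∃ k < n, v (i + k) = a := by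
  simp [factorAt]

lemma nodup_factorAt_iff {n : ℕ} :
    (∀ i, (factorAt v i n).Nodup) ↔ ∀ i p, 0 < p → v (i + p) = v i → n ≤ p := by
  constructor
  · intro h i p hp hv
    by_contra! hlt
    have := List.inj_on_of_nodup_map (h i) (List.mem_range.2 hlt)
      (List.mem_range.2 (hp.trans hlt)) (by simpa using hv)
    omega
  · intro h i
    refine List.Nodup.map_on (fun x hx y hy hxy => ?_) List.nodup_range
    rw [List.mem_range] at hx hy
    by_contra hne
    rcases lt_or_gt_of_ne hne with hlt | hlt
    · have := h (i + x) (y - x) (by omega) (by rw [hxy]; congr 1; omega)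
      omega
    · have := h (i + y) (x - y) (by omega) (by rw [← hxy]; congr 1; omega)
      omega

lemma Recurrent.exists_factorAt_eq_of_le (hrec : Recurrent v) (i n N : ℕ) :
    ∃ j, N ≤ j ∧ factorAt v j n = factorAt v i n := by
  simpa only [OccursAt, length_factorAt] using hrec _ (isFactor_factorAt v i n) N

lemma Recurrent.exists_factorAt_eq_add_mul (hrec : Recurrent v) (i n : ℕ) {q : ℕ} (hq : 0 < q) :
    ∃ j t, factorAt v j n = factorAt v i n ∧
      factorAt v (j + (t + 1) * q) n = factorAt v i n := by
  have hinf : {j | factorAt v j n = factorAt v i n}.Infinite :=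
    Set.infinite_of_forall_exists_gt fun N =>
      let ⟨j, hNj, hj⟩ := hrec.exists_factorAt_eq_of_le i n (N + 1)
      ⟨j, hj, hNj⟩
  obtain ⟨j, hj, l, hl, hjl, hmod⟩ := hinf.exists_lt_map_eq_of_mapsTo
    (fun m _ => Set.mem_Iio.2 (Nat.mod_lt m hq)) (Set.finite_Iio q)
  obtain ⟨t, ht⟩ := (Nat.modEq_iff_dvd' hjl.le).1 hmod
  obtain ⟨t, rfl⟩ : ∃ s, t = s + 1 := Nat.exists_eq_succ_of_ne_zero (by rintro rfl; omega)
  refine ⟨j, t, hj, ?_⟩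
  rwa [mul_comm, ← ht, Nat.add_sub_cancel' hjl.le]

/-- The letter at position `n` of `v` reappears `p` positions later, possibly with further
occurrences in between. -/
def ReturnsAfter (v : ℕ → α) (p n : ℕ) : Prop := v (n + p) = v n

lemma eq_add_mul_of_invariant {P : ℕ → Prop} {r q : ℕ} (hr : P r)
    (hP : ∀ n, P n → P (n + q) ∧ ReturnsAfter v q n) (j : ℕ) : v (r + j * q) = v r := by
  suffices P (r + j * q) ∧ v (r + j * q) = v r from this.2
  induction j with
  | zero => simpa using hr
  | succ j ih =>
    rw [Nat.succ_mul, ← add_assoc]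
    exact ⟨(hP _ ih.1).1, (hP _ ih.1).2.trans ih.2⟩

end Words

section CriticalExponent

variable {v : ℕ → α}

lemma div_le_criticalExponent {i p m : ℕ} (hp : 0 < p)
    (h : ∀ k < m, ReturnsAfter v p (i + k)) :
    ((p + m : ℕ) : ℝ≥0∞) / p ≤ criticalExponent v := by
  set z := factorAt v i (p + m)
  have hlen : z.length = p + m := length_factorAt v i (p + m)
  have hper : IsPeriod z p := by
    refine ⟨hp, fun k hk => ?_⟩
    rw [hlen] at hk
    simp only [z, factorAt, List.getElem?_map, List.getElem?_range hk,
      List.getElem?_range (show k < p + m by omega), Option.map_some]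
    rw [← add_assoc, h k (by omega)]
  have hmin : minPeriod z ≤ p := Nat.sInf_le hper
  have hne : z ≠ [] := List.ne_nil_of_length_pos (by omega)
  calc ((p + m : ℕ) : ℝ≥0∞) / p ≤ expE z := by
        rw [expE, hlen]
        gcongr
    _ ≤ criticalExponent v :=
        le_iSup₂_of_le z ⟨isFactor_factorAt v i _, hne⟩ le_rfl

lemma mul_le_of_criticalExponent_le {k : ℕ}
    (hE : criticalExponent v ≤ ((k + 1 : ℕ) : ℝ≥0∞) / k) {i p m : ℕ} (hp : 0 < p)
    (h : ∀ l < m, ReturnsAfter v p (i + l)) : m * k ≤ p := by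
  rcases Nat.eq_zero_or_pos k with rfl | hk
  · simp
  have hdiv := (div_le_criticalExponent hp h).trans hE
  rw [ENNReal.div_le_iff (by exact_mod_cast hp.ne') (by simp), ← ENNReal.mul_div_right_comm,
    ENNReal.le_div_iff_mul_le (Or.inl (by exact_mod_cast hk.ne')) (Or.inl (by simp))] at hdiv
  have hmul : (p + m) * k ≤ (k + 1) * p := by exact_mod_cast hdiv
  linarith

lemma le_of_criticalExponent_le {k : ℕ}
    (hE : criticalExponent v ≤ ((k + 1 : ℕ) : ℝ≥0∞) / k) {i p : ℕ} (hp : 0 < p)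
    (h : ReturnsAfter v p i) : k ≤ p := by
  simpa using mul_le_of_criticalExponent_le hE (m := 1) hp fun l hl => by
    rwa [Nat.lt_one_iff.1 hl]

lemma two_mul_le_of_criticalExponent_le {k : ℕ}
    (hE : criticalExponent v ≤ ((k + 1 : ℕ) : ℝ≥0∞) / k) {i p : ℕ} (hp : 0 < p)
    (h₀ : ReturnsAfter v p i) (h₁ : ReturnsAfter v p (i + 1)) : 2 * k ≤ p :=
  mul_le_of_criticalExponent_le hE hp fun l hl => by
    interval_cases l
    exacts [h₀, h₁]

lemma criticalExponent_eq_top_of_periodic {p : ℕ} (hp : 0 < p) (h : Function.Periodic v p) :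
    criticalExponent v = ⊤ := by
  refine ENNReal.eq_top_of_forall_nnreal_le fun x => ?_
  obtain ⟨n, hn⟩ := exists_nat_ge x
  have hp₀ : (p : ℝ≥0∞) ≠ 0 := by exact_mod_cast hp.ne'
  calc (x : ℝ≥0∞) ≤ n := by exact_mod_cast hn
    _ ≤ ((p + n * p : ℕ) : ℝ≥0∞) / p := by
        rw [ENNReal.le_div_iff_mul_le (Or.inl hp₀) (Or.inl (by simp))]
        exact_mod_cast Nat.le_add_left _ _
    _ ≤ criticalExponent v := div_le_criticalExponent (i := 0) hp fun _ _ => h _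

lemma criticalExponent_ne_top_of_le {k : ℕ} (hk : 0 < k)
    (hE : criticalExponent v ≤ ((k + 1 : ℕ) : ℝ≥0∞) / k) : criticalExponent v ≠ ⊤ :=
  ne_top_of_le_ne_top (ENNReal.div_ne_top (by simp) (by simp [hk.ne'])) hE

end CriticalExponent

section LetterCount

variable [DecidableEq α] {v : ℕ → α} {a : α}

/-- The number of occurrences of the letter `a` in the factor of `v` of length `n` starting at
position `i`. -/
def letterCount (v : ℕ → α) (a : α) (i n : ℕ) : ℕ := (factorAt v i n).count a

lemma letterCount_zero (v : ℕ → α) (a : α) (i : ℕ) : letterCount v a i 0 = 0 := by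
  simp [letterCount, factorAt]

lemma letterCount_one (v : ℕ → α) (a : α) (i : ℕ) :
    letterCount v a i 1 = if v i = a then 1 else 0 := by
  simp [letterCount, factorAt, List.count_singleton]

lemma letterCount_add (v : ℕ → α) (a : α) (i m n : ℕ) :
    letterCount v a i (m + n) = letterCount v a i m + letterCount v a (i + m) n := by
  rw [letterCount, factorAt_add, List.count_append, letterCount, letterCount]

lemma letterCount_mul_le {n M : ℕ} (h : ∀ i, letterCount v a i n ≤ M) (i t : ℕ) :
    letterCount v a i (t * n) ≤ t * M := by
  induction t with
  | zero => simp [letterCount_zero]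
  | succ t ih =>
    rw [Nat.succ_mul, letterCount_add, Nat.succ_mul]
    exact Nat.add_le_add ih (h _)

lemma mul_le_letterCount {n M : ℕ} (h : ∀ i, M ≤ letterCount v a i n) (i t : ℕ) :
    t * M ≤ letterCount v a i (t * n) := by
  induction t with
  | zero => simp
  | succ t ih =>
    rw [Nat.succ_mul, Nat.succ_mul, letterCount_add]
    exact Nat.add_le_add ih (h _)

lemma two_le_letterCount_of_returnsAfter {i p : ℕ} (hp : 0 < p) (h : ReturnsAfter v p i) :
    2 ≤ letterCount v (v i) i (p + 1) := by
  obtain ⟨q, rfl⟩ := Nat.exists_eq_succ_of_ne_zero hp.ne'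
  rw [ReturnsAfter] at h
  have hlast : letterCount v (v i) (i + (q + 1)) 1 = 1 := by
    rw [letterCount_one, if_pos h]
  have hfirst : letterCount v (v i) i (1 + q) = 1 + letterCount v (v i) (i + 1) q := by
    rw [letterCount_add, letterCount_one, if_pos rfl]
  rw [letterCount_add, hlast, Nat.succ_eq_one_add, hfirst]
  omega

lemma Balanced.letterCount_le_add_one (hbal : Balanced v) (a : α) (i j n : ℕ) :
    letterCount v a i n ≤ letterCount v a j n + 1 := by
  have h := (abs_le.1 (hbal a _ _ (isFactor_factorAt v i n) (isFactor_factorAt v j n)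
    (by rw [length_factorAt, length_factorAt]))).2
  unfold letterCount
  omega

lemma Balanced.mem_factorAt_of_returnsAfter (hbal : Balanced v) {i p : ℕ} (hp : 0 < p)
    (h : ReturnsAfter v p i) (j : ℕ) : v i ∈ factorAt v j (p + 1) := by
  have htwo := two_le_letterCount_of_returnsAfter hp h
  have hle := hbal.letterCount_le_add_one (v i) i j (p + 1)
  exact List.count_pos_iff.1 (show 0 < letterCount v (v i) j (p + 1) by omega)

end LetterCount

section Frequency

variable [DecidableEq α] {v : ℕ → α} {a : α} {ρ : ℝ}

lemma Balanced.exists_hasFreq (hbal : Balanced v) (a : α) : ∃ ρ : ℝ, HasFreq v a ρ := by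
  have hsub : Subadditive fun n => (letterCount v a 0 n : ℝ) + 1 := by
    intro m n
    have hle : letterCount v a 0 (m + n) ≤ letterCount v a 0 m + (letterCount v a 0 n + 1) := by
      rw [letterCount_add]
      exact Nat.add_le_add_left (hbal.letterCount_le_add_one a _ _ n) _
    have hle' : (letterCount v a 0 (m + n) : ℝ) ≤
        letterCount v a 0 m + (letterCount v a 0 n + 1) := by exact_mod_cast hle
    linarith
  have hbdd : BddBelow (Set.range fun n => ((letterCount v a 0 n : ℝ) + 1) / n) := by
    refine ⟨0, ?_⟩
    rintro _ ⟨n, rfl⟩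
    positivity
  have hlim := (hsub.tendsto_lim hbdd).sub (tendsto_one_div_atTop_nhds_zero_nat (𝕜 := ℝ))
  rw [sub_zero] at hlim
  refine ⟨hsub.lim, hlim.congr fun n => ?_⟩
  rw [← sub_div, add_sub_cancel_right, letterCount]

lemma HasFreq.tendsto_letterCount_mul_div (hρ : HasFreq v a ρ) (n : ℕ) :
    Tendsto (fun t : ℕ => (letterCount v a 0 (t * n) : ℝ) / t) atTop (nhds (n * ρ)) := by
  rcases Nat.eq_zero_or_pos n with rfl | hn
  · simp [letterCount_zero]
  refine ((hρ.comp (tendsto_id.atTop_mul_const' hn)).const_mul (n : ℝ)).congr fun t => ?_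
  have hn₀ : (n : ℝ) ≠ 0 := by exact_mod_cast hn.ne'
  simp only [Function.comp_apply, id_eq, letterCount, Nat.cast_mul]
  rw [mul_comm (t : ℝ), ← mul_div_assoc, mul_div_mul_left _ _ hn₀]

lemma HasFreq.mul_le_of_forall_letterCount_le (hρ : HasFreq v a ρ) {n M : ℕ}
    (h : ∀ i, letterCount v a i n ≤ M) : n * ρ ≤ M := by
  refine le_of_tendsto' (hρ.tendsto_letterCount_mul_div n) fun t => ?_
  refine div_le_of_le_mul₀ t.cast_nonneg M.cast_nonneg ?_
  exact_mod_cast (letterCount_mul_le h 0 t).trans_eq (mul_comm t M)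

lemma HasFreq.le_mul_of_forall_le_letterCount (hρ : HasFreq v a ρ) {n M : ℕ}
    (h : ∀ i, M ≤ letterCount v a i n) : (M : ℝ) ≤ n * ρ := by
  refine ge_of_tendsto (hρ.tendsto_letterCount_mul_div n) ?_
  filter_upwards [eventually_gt_atTop 0] with t ht
  rw [le_div_iff₀ (by exact_mod_cast ht), mul_comm]
  exact_mod_cast mul_le_letterCount h 0 t

lemma HasFreq.nonneg (hρ : HasFreq v a ρ) : 0 ≤ ρ := by
  simpa using hρ.le_mul_of_forall_le_letterCount (n := 1) (M := 0) fun _ => Nat.zero_le _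

lemma HasFreq.mul_le_one_of_nodup (hρ : HasFreq v a ρ) {n : ℕ}
    (h : ∀ i, (factorAt v i n).Nodup) : n * ρ ≤ 1 := by
  exact_mod_cast hρ.mul_le_of_forall_letterCount_le (M := 1) fun i =>
    List.nodup_iff_count_le_one.1 (h i) a

lemma HasFreq.exists_eq_of_ne_zero (hρ : HasFreq v a ρ) (h₀ : ρ ≠ 0) : ∃ i, v i = a := by
  by_contra! ha
  have hle := hρ.mul_le_of_forall_letterCount_le (n := 1) (M := 0) fun i => by
    rw [letterCount_one, if_neg (ha i)]
  exact h₀ (le_antisymm (by simpa using hle) hρ.nonneg)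

lemma Balanced.abs_letterCount_sub_le (hbal : Balanced v) (hρ : HasFreq v a ρ) (i n : ℕ) :
    |(letterCount v a i n : ℝ) - n * ρ| ≤ 1 := by
  have hupper := hρ.mul_le_of_forall_letterCount_le fun j => hbal.letterCount_le_add_one a j i n
  have hlower := hρ.le_mul_of_forall_le_letterCount fun j =>
    Nat.sub_le_of_le_add (hbal.letterCount_le_add_one a i j n)
  have hsub : (letterCount v a i n : ℝ) ≤ ((letterCount v a i n - 1 : ℕ) : ℝ) + 1 := by
    exact_mod_cast Nat.le_add_of_sub_le le_rfl
  push_cast at hupper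
  exact abs_le.2 ⟨by linarith, by linarith⟩

lemma Balanced.one_le_mul_freq_of_returnsAfter (hbal : Balanced v) {i p : ℕ}
    (hρ : HasFreq v (v i) ρ) (hp : 0 < p) (h : ReturnsAfter v p i) :
    1 ≤ ((p + 1 : ℕ) : ℝ) * ρ := by
  have htwo : (2 : ℝ) ≤ letterCount v (v i) i (p + 1) := by
    exact_mod_cast two_le_letterCount_of_returnsAfter hp h
  linarith [(abs_le.1 (hbal.abs_letterCount_sub_le hρ i (p + 1))).2]

end Frequency

section RationalFrequency

variable [DecidableEq α] {v : ℕ → α} {a b : α} {ρ : ℝ}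

lemma Balanced.abs_letterCount_sub_le_of_mul_freq_eq (hbal : Balanced v) (hρ : HasFreq v a ρ)
    {n N : ℕ} (hN : n * ρ = N) (i : ℕ) : |(letterCount v a i n : ℤ) - N| ≤ 1 := by
  have := hbal.abs_letterCount_sub_le hρ i n
  rw [hN] at this
  exact_mod_cast this

lemma letterCount_eq_of_mul_freq_eq (hrec : Recurrent v) (hbal : Balanced v) (hρ : HasFreq v a ρ)
    {N q : ℕ} (hq : 0 < q) (hN : q * ρ = N) (i : ℕ) : letterCount v a i q = N := by
  -- Two disjoint copies of the window at `i`, a multiple of `q` apart, would add up their excess.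
  obtain ⟨j, t, hj, hjt⟩ := hrec.exists_factorAt_eq_add_mul i q hq
  have hsum : letterCount v a j ((t + 2) * q) =
      2 * letterCount v a i q + letterCount v a (j + q) (t * q) := by
    have hfirst : letterCount v a j q = letterCount v a i q := by rw [letterCount, hj, letterCount]
    have hlast : letterCount v a (j + (t + 1) * q) q = letterCount v a i q := by
      rw [letterCount, hjt, letterCount]
    rw [Nat.succ_mul, letterCount_add, hlast, Nat.succ_mul, add_comm (t * q), letterCount_add,
      hfirst]
    ring
  have hdev := abs_le.1 (hbal.abs_letterCount_sub_le_of_mul_freq_eq hρ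
    (show (((t + 2) * q : ℕ) : ℝ) * ρ = ((t + 2) * N : ℕ) by push_cast; rw [mul_assoc, hN]) j)
  rw [hsum] at hdev
  push_cast at hdev
  have hbal_i := fun l => hbal.letterCount_le_add_one a i l q
  have hbal_i' := fun l => hbal.letterCount_le_add_one a l i q
  rcases lt_trichotomy (letterCount v a i q) N with hlt | heq | hlt
  · have hmid := letterCount_mul_le (v := v) (a := a) (M := N) (n := q)
      (fun l => (hbal_i' l).trans hlt) (j + q) t
    zify at hmid hlt
    linarith [hdev.1]
  · exact heq
  · have hmid := mul_le_letterCount (v := v) (a := a) (M := N) (n := q)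
      (fun l => Nat.le_of_lt_succ (hlt.trans_le (hbal_i l))) (j + q) t
    zify at hmid hlt
    linarith [hdev.2]

lemma exists_periodic_letter_of_not_irrational (hrec : Recurrent v) (hbal : Balanced v)
    (hρ : HasFreq v a ρ) (hrat : ¬ Irrational ρ) :
    ∃ q, 0 < q ∧ Function.Periodic (fun n => v n = a) q := by
  obtain ⟨P, q, hq, hqρ⟩ : ∃ P q : ℕ, 0 < q ∧ q * ρ = P := by
    obtain ⟨x, rfl⟩ := not_not.1 hrat
    lift x to ℚ≥0 using by exact_mod_cast hρ.nonneg
    exact ⟨x.num, x.den, x.den_pos, by exact_mod_cast x.den_mul_eq_num⟩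
  refine ⟨q, hq, fun n => ?_⟩
  have hn := letterCount_eq_of_mul_freq_eq hrec hbal hρ hq hqρ n
  have hn₁ := letterCount_eq_of_mul_freq_eq hrec hbal hρ hq hqρ (n + 1)
  have hdrop := letterCount_add v a n 1 q
  have hpush := letterCount_add v a n q 1
  rw [add_comm 1 q, letterCount_one] at hdrop
  rw [letterCount_one] at hpush
  split_ifs at hdrop hpush with h₀ h₁ h₁ <;> simp_all

-- Some multiple `k * θ` lies within `ε` of an integer `p`, which forces `S (j + k) = S j + p`; the
-- drift of `S` from the slope `θ` is then unbounded unless `k * θ = p`.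
lemma not_irrational_of_abs_increment_sub_le {S : ℕ → ℤ} {θ ε : ℝ} (hε : 0 < ε)
    (h : ∀ j l : ℕ, |(S (j + l) - S j : ℝ) - l * θ| ≤ 1 - ε) : ¬ Irrational θ := by
  intro hθ
  obtain ⟨k, p, hk, hkp⟩ : ∃ (k : ℕ) (p : ℤ), 0 < k ∧ |k * θ - p| < ε := by
    obtain ⟨n, hn⟩ := exists_nat_one_div_lt hε
    obtain ⟨k, hk, -, hle⟩ := Real.exists_nat_abs_mul_sub_round_le θ n.succ_pos
    refine ⟨k, _, hk, hle.trans_lt (lt_of_le_of_lt ?_ hn)⟩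
    gcongr
    exact Nat.le_succ n
  have hstep : ∀ j, S (j + k) = S j + p := fun j => by
    have hlt : |(S (j + k) - S j - p : ℝ)| < 1 := by
      have := abs_add_le ((S (j + k) - S j : ℝ) - k * θ) (k * θ - p)
      rw [sub_add_sub_cancel] at this
      linarith [h j k]
    have := Int.abs_lt_one_iff.1 (show |S (j + k) - S j - p| < 1 by exact_mod_cast hlt)
    omega
  have hmul : ∀ t : ℕ, S (t * k) = S 0 + t * p := fun t => by
    induction t with
    | zero => simp
    | succ t ih =>
      rw [Nat.succ_mul, hstep, ih]
      push_cast
      ring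
  have hδ : 0 < |k * θ - p| := abs_pos.2 (sub_ne_zero.2 ((hθ.natCast_mul hk.ne').ne_int p))
  obtain ⟨t, ht⟩ := exists_nat_gt (1 / |k * θ - p|)
  rw [div_lt_iff₀ hδ] at ht
  have hdev := h 0 (t * k)
  rw [zero_add, hmul] at hdev
  have hdrift : ((S 0 + t * p : ℤ) - S 0 : ℝ) - (t * k : ℕ) * θ = -(t * (k * θ - p)) := by
    push_cast
    ring
  rw [hdrift, abs_neg, abs_mul, Nat.abs_cast] at hdev
  linarith

-- Both ends of the window are `a`: adding or dropping one sharpens the deviation bound by `ρ`.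
lemma abs_letterCount_sub_le_of_arithmetic_progression (hbal : Balanced v) (hab : a ≠ b)
    (hρ : HasFreq v b ρ) {r q : ℕ} (hr : ∀ j, v (r + j * q) = a) (j l : ℕ) :
    |(letterCount v b (r + j * q) (l * q) : ℝ) - (l * q : ℕ) * ρ| ≤ 1 - ρ := by
  have hend : ∀ j, letterCount v b (r + j * q) 1 = 0 := fun j => by
    rw [letterCount_one, hr, if_neg hab]
  have hextend : letterCount v b (r + j * q) (l * q + 1) =
      letterCount v b (r + j * q) (l * q) := by
    rw [letterCount_add, add_assoc, ← add_mul, hend, add_zero]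
  have hlower := (abs_le.1 (hbal.abs_letterCount_sub_le hρ (r + j * q) (l * q + 1))).1
  rw [hextend] at hlower
  push_cast at hlower
  refine abs_le.2 ⟨by push_cast; linarith, ?_⟩
  rcases Nat.eq_zero_or_pos (l * q) with hlq | hlq
  · rw [← Nat.cast_mul, hlq, letterCount_zero] at hlower
    rw [hlq, letterCount_zero]
    push_cast at hlower ⊢
    linarith
  · obtain ⟨s, hs⟩ := Nat.exists_eq_add_of_le hlq
    have hdrop : letterCount v b (r + j * q) (l * q) = letterCount v b (r + j * q + 1) s := by
      rw [hs, letterCount_add, hend, zero_add]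
    have hupper := (abs_le.1 (hbal.abs_letterCount_sub_le hρ (r + j * q + 1) s)).2
    rw [hdrop, hs]
    push_cast
    linarith

lemma not_irrational_of_arithmetic_progression (hbal : Balanced v) (hab : a ≠ b)
    (hρ : HasFreq v b ρ) {r q : ℕ} (hq : 0 < q) (hr : ∀ j, v (r + j * q) = a) :
    ¬ Irrational ρ := by
  intro hirr
  have hρpos : 0 < ρ := lt_of_le_of_ne hρ.nonneg hirr.ne_zero.symm
  refine not_irrational_of_abs_increment_sub_le (S := fun j => letterCount v b r (j * q))
    (θ := q * ρ) hρpos (fun j l => ?_) (hirr.natCast_mul hq.ne')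
  have hincr := letterCount_add v b r (j * q) (l * q)
  rw [← add_mul] at hincr
  have hdev := abs_letterCount_sub_le_of_arithmetic_progression hbal hab hρ hr j l
  rw [hincr]
  push_cast at hdev ⊢
  rwa [add_sub_cancel_left, ← mul_assoc]

theorem criticalExponent_eq_top_of_arithmetic_progression [Finite α] (hrec : Recurrent v)
    (hbal : Balanced v) {r q : ℕ} (hq : 0 < q) (hr : ∀ j, v (r + j * q) = v r) :
    criticalExponent v = ⊤ := by
  have hper : ∀ c, ∃ p, 0 < p ∧ (v r ≠ c → Function.Periodic (fun n => v n = c) p) := by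
    intro c
    by_cases hc : v r = c
    · exact ⟨1, one_pos, fun h => absurd hc h⟩
    · obtain ⟨ρ, hρ⟩ := hbal.exists_hasFreq c
      obtain ⟨p, hp, h⟩ := exists_periodic_letter_of_not_irrational hrec hbal hρ
        (not_irrational_of_arithmetic_progression hbal hc hρ hq hr)
      exact ⟨p, hp, fun _ => h⟩
  choose p hp hper using hper
  cases nonempty_fintype α
  have hprod : ∀ c, v r ≠ c → ∀ n, v (n + ∏ c, p c) = c ↔ v n = c := by
    intro c hc n
    obtain ⟨t, ht⟩ := Finset.dvd_prod_of_mem p (Finset.mem_univ c)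
    rw [ht, mul_comm]
    exact iff_of_eq ((hper c hc).nat_mul t n)
  refine criticalExponent_eq_top_of_periodic
    (show 0 < ∏ c, p c from Finset.prod_pos fun c _ => hp c) fun n => ?_
  by_cases hn : v r = v n
  · by_contra hne
    exact hne ((hprod _ (fun h => hne (h.symm.trans hn)) n).1 rfl).symm
  · exact (hprod _ hn n).2 rfl

theorem HasFreq.irrational [Finite α] (hρ : HasFreq v a ρ) (h₀ : ρ ≠ 0) (hrec : Recurrent v)
    (hbal : Balanced v) (hE : criticalExponent v ≠ ⊤) : Irrational ρ := by
  by_contra hrat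
  obtain ⟨q, hq, hper⟩ := exists_periodic_letter_of_not_irrational hrec hbal hρ hrat
  obtain ⟨r, rfl⟩ := hρ.exists_eq_of_ne_zero h₀
  exact hE (criticalExponent_eq_top_of_arithmetic_progression hrec hbal hq fun j =>
    (iff_of_eq (hper.nat_mul j r)).2 rfl)

end RationalFrequency

section PansiotSequences

variable {v : ℕ → α} {D : ℕ}

lemma eq_of_notMem_of_nodup [Fintype α] {l : List α} (hl : l.Nodup)
    (hcard : Fintype.card α ≤ l.length + 1) {x y : α} (hx : x ∉ l) (hy : y ∉ l) : x = y := by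
  by_contra hxy
  have hnodup : (x :: y :: l).Nodup := by simp [hxy, hx, hy, hl]
  have := hnodup.length_le_card
  simp only [List.length_cons] at this
  omega

lemma returnsAfter_of_notMem_factorAt [Fintype α] (hnodup : ∀ i, (factorAt v i D).Nodup)
    (hcard : Fintype.card α ≤ D + 1) {a : α} {n : ℕ} (ha : a ∉ factorAt v n (D + 1)) :
    ReturnsAfter v D n := by
  by_contra hne
  rw [factorAt_add, List.mem_append, not_or] at ha
  have hlast : v (n + D) ∉ factorAt v n D := by
    rw [mem_factorAt]
    rintro ⟨k, hk, h⟩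
    have := nodup_factorAt_iff.1 hnodup (n + k) (D - k) (by omega) (by rw [h]; congr 1; omega)
    obtain rfl : k = 0 := by omega
    exact hne h.symm
  have heq : v (n + D) = a :=
    eq_of_notMem_of_nodup (hnodup n) (by rwa [length_factorAt]) hlast ha.1
  exact ha.2 (mem_factorAt.2 ⟨0, one_pos, heq⟩)

theorem pansiot_of_criticalExponent_le [Fintype α] {k : ℕ} (hk : 3 ≤ k)
    (hcard : Fintype.card α ≤ k + 2) (hE : criticalExponent v ≤ ((k + 1 : ℕ) : ℝ≥0∞) / k)
    (hnodup : ∀ i, (factorAt v i (k + 1)).Nodup) : Pansiot (k + 2) v := by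
  refine ⟨hnodup, ?_⟩
  rintro _ i j ⟨hij, rfl, hj, hbetween⟩ hnext
  have hlong : 2 * k ≤ j - i := two_mul_le_of_criticalExponent_le hE (i := i) (by omega)
    (by rw [ReturnsAfter, ← hj]; congr 1; omega) (by rw [ReturnsAfter, hnext]; congr 1; omega)
  -- The windows strictly between the two occurrences miss the letter `v i`, so they repeat after
  -- `k + 1` steps.
  have hforced : ∀ s, i < s → s + (k + 1) < j → ReturnsAfter v (k + 1) s := fun s his hsj =>
    returnsAfter_of_notMem_factorAt hnodup hcard (a := v i) (by
      rw [mem_factorAt]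
      rintro ⟨l, hl, h⟩
      exact hbetween (s + l) (by omega) (by omega) h)
  have hfirst : ReturnsAfter v (k + 1) (i + 1) := hforced (i + 1) (by omega) (by omega)
  have hlonger := nodup_factorAt_iff.1 hnodup (i + 1 + (k + 1)) (j - i - (k + 1)) (by omega)
    (by rw [hfirst, hnext]; congr 1; omega)
  have := two_mul_le_of_criticalExponent_le hE (by omega) hfirst
    (hforced (i + 1 + 1) (by omega) (by omega))
  omega

namespace Pansiot

lemma le_of_returnsAfter (hv : Pansiot (D + 1) v) {n p : ℕ} (hp : 0 < p)
    (h : ReturnsAfter v p n) : D ≤ p :=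
  nodup_factorAt_iff.1 hv.1 n p hp h

lemma notMem_factorAt (hv : Pansiot (D + 1) v) {n s m : ℕ} (hs : 0 < s)
    (h : ∀ p, D ≤ p → p < s + m → ¬ ReturnsAfter v p n) : v n ∉ factorAt v (n + s) m := by
  rw [mem_factorAt]
  rintro ⟨k, hk, hret⟩
  rw [add_assoc] at hret
  exact h (s + k) (hv.le_of_returnsAfter (by omega) hret) (by omega) hret

lemma consecOcc_of_returnsAfter (hv : Pansiot (D + 1) v) {n p : ℕ} (hp : 0 < p)
    (h : ReturnsAfter v p n) (hne : ∀ q, D ≤ q → q < p → ¬ ReturnsAfter v q n) :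
    ConsecOcc v (v n) n (n + p) := by
  refine ⟨by omega, rfl, h, fun k hnk hkp hk => ?_⟩
  obtain ⟨q, rfl⟩ := Nat.exists_eq_add_of_lt hnk
  exact hne (q + 1) (hv.le_of_returnsAfter (by omega) hk) (by omega) hk

lemma not_returnsAfter_succ (hv : Pansiot (D + 1) v) (hD : 0 < D) {n : ℕ}
    (h : ReturnsAfter v D n) : ¬ ReturnsAfter v D (n + 1) := by
  intro hsucc
  refine hv.2 _ _ _ (hv.consecOcc_of_returnsAfter hD h fun q hDq hqD => by omega) ?_
  rw [add_right_comm, hsucc]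

lemma not_returnsAfter_of_succ (hv : Pansiot (D + 1) v) (hD : 0 < D) {n : ℕ}
    (h : ReturnsAfter v D (n + 1)) : ¬ ReturnsAfter v D n :=
  fun hn => hv.not_returnsAfter_succ hD hn h

lemma not_returnsAfter_add_one_of_succ (hv : Pansiot (D + 1) v) (hD : 1 < D) {n : ℕ}
    (h : ReturnsAfter v D (n + 1)) : ¬ ReturnsAfter v (D + 1) n := by
  intro hn
  have hadj : ReturnsAfter v 1 n := by
    rw [ReturnsAfter, ← h, add_right_comm, add_assoc, hn]
  exact absurd (hv.le_of_returnsAfter one_pos hadj) (by omega)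

lemma returnsAfter_add_one [Fintype α] (hv : Pansiot (D + 1) v)
    (hcard : Fintype.card α ≤ D + 1) {n : ℕ} (h₀ : ¬ ReturnsAfter v D n)
    (h₁ : ¬ ReturnsAfter v D (n + 1)) : ReturnsAfter v (D + 1) n := by
  by_contra hne
  refine h₁ (returnsAfter_of_notMem_factorAt hv.1 hcard
    (hv.notMem_factorAt one_pos fun p hDp hp => ?_))
  obtain rfl | rfl : p = D ∨ p = D + 1 := by omega
  exacts [h₀, hne]

lemma returnsAfter_add_two [Fintype α] (hv : Pansiot (D + 1) v) (hD : 1 < D)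
    (hcard : Fintype.card α ≤ D + 1) {n : ℕ} (h : ReturnsAfter v D (n + 1)) :
    ReturnsAfter v (D + 2) n := by
  by_contra hne
  refine hv.not_returnsAfter_succ (by omega) h (returnsAfter_of_notMem_factorAt hv.1 hcard
    (hv.notMem_factorAt (s := 2) two_pos fun p hDp hp => ?_))
  obtain rfl | rfl | rfl : p = D ∨ p = D + 1 ∨ p = D + 2 := by omega
  exacts [hv.not_returnsAfter_of_succ (by omega) h, hv.not_returnsAfter_add_one_of_succ hD h, hne]

lemma returnsAfter_of_not_of_not [Fintype α] (hv : Pansiot (D + 1) v)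
    (hcard : Fintype.card α ≤ D + 1) {n : ℕ} (h₀ : ¬ ReturnsAfter v D n)
    (h₁ : ¬ ReturnsAfter v D (n + 1)) : ReturnsAfter v D (n + 2) := by
  by_contra h₂
  have hnext : ReturnsAfter v (D + 1) (n + 1) := hv.returnsAfter_add_one hcard h₁ h₂
  refine hv.2 _ _ _ (hv.consecOcc_of_returnsAfter (by omega)
    (hv.returnsAfter_add_one hcard h₀ h₁) fun q hDq hq => ?_) ?_
  · obtain rfl : q = D := by omega
    exact h₀
  · rw [add_right_comm, hnext]

end Pansiot

/-- The letter `a` never reappears exactly `D` positions after one of its occurrences in `v`. In a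
Pansiot sequence, where `D` is the least possible distance between equal letters, these are the
letters that always take longer to return. -/
def IsSlow (v : ℕ → α) (D : ℕ) (a : α) : Prop := ∀ n, v n = a → ¬ ReturnsAfter v D n

namespace Pansiot

lemma isSlow_of_returnsAfter_succ [DecidableEq α] (hv : Pansiot (D + 1) v) (hD : 1 < D)
    (hbal : Balanced v) {n : ℕ} (h : ReturnsAfter v D (n + 1)) : IsSlow v D (v n) := by
  intro i hi hret
  have hmem := hbal.mem_factorAt_of_returnsAfter (by omega) hret (n + 1)
  rw [hi] at hmem
  refine hv.notMem_factorAt one_pos (fun p hDp hp => ?_) hmem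
  obtain rfl | rfl : p = D ∨ p = D + 1 := by omega
  exacts [hv.not_returnsAfter_of_succ (by omega) h, hv.not_returnsAfter_add_one_of_succ hD h]

lemma eq_add_mul_of_isSlow [Fintype α] [DecidableEq α] (hv : Pansiot (D + 1) v) (hD : 1 < D)
    (hcard : Fintype.card α ≤ D + 1) (hbal : Balanced v) {n : ℕ}
    (hslow : IsSlow v D (v (n + 2))) (hnext : ¬ ReturnsAfter v D (n + 3)) (j : ℕ) :
    v (n + 1 + j * D) = v (n + 1) := by
  rw [add_right_comm]
  refine eq_add_mul_of_invariant (v := fun m => v (m + 1))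
    (P := fun m => IsSlow v D (v (m + 2)) ∧ ¬ ReturnsAfter v D (m + 3)) ⟨hslow, hnext⟩ ?_ j
  rintro m ⟨hslow, hnext⟩
  -- The letters at `m` and `m + 2` return after `D + 2` and `D + 1` steps, which reproduces the
  -- pattern `D` positions later.
  have hret : ReturnsAfter v D (m + 1) := by
    by_contra hne
    exact hnext (hv.returnsAfter_of_not_of_not hcard hne (hslow _ rfl))
  have hback : v (m + D + 2) = v m := hv.returnsAfter_add_two hD hcard hret
  have hback' : v (m + D + 3) = v (m + 2) := by
    rw [← hv.returnsAfter_add_one hcard (hslow _ rfl) hnext]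
    congr 1
    omega
  refine ⟨⟨?_, hslow _ hback'⟩, ?_⟩
  · rw [hback]
    exact hv.isSlow_of_returnsAfter_succ hD hbal hret
  · rw [ReturnsAfter, add_right_comm, hret]

theorem exists_arithmetic_progression [Fintype α] [DecidableEq α] (hv : Pansiot (D + 1) v)
    (hD : 1 < D) (hcard : Fintype.card α ≤ D + 1) (hbal : Balanced v) :
    ∃ r q, 0 < q ∧ ∀ j, v (r + j * q) = v r := by
  have hback : ∀ n, ReturnsAfter v D (n + 1) → ReturnsAfter v (D + 2) n :=
    fun n => hv.returnsAfter_add_two hD hcard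
  by_cases hcont : ∀ n, ReturnsAfter v D (n + 1) → ReturnsAfter v D (n + (D + 2) + 1)
  · obtain ⟨r, hr⟩ : ∃ r, ReturnsAfter v D (r + 1) := by
      by_contra! hnone
      exact hnone 2 (hv.returnsAfter_of_not_of_not hcard (hnone 0) (hnone 1))
    exact ⟨r, D + 2, by omega, eq_add_mul_of_invariant hr fun n hn => ⟨hcont n hn, hback n hn⟩⟩
  · push Not at hcont
    obtain ⟨n, hn, hne⟩ := hcont
    refine ⟨n + D + 1, D, by omega, hv.eq_add_mul_of_isSlow hD hcard hbal ?_ hne⟩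
    rw [add_assoc, hback n hn]
    exact hv.isSlow_of_returnsAfter_succ hD hbal hn

end Pansiot

end PansiotSequences

section MaximalFrequency

variable [DecidableEq α] {v : ℕ → α} {k : ℕ}

lemma HasFreq.lt_one_div_of_criticalExponent_le [Finite α] {a : α} {ρ : ℝ} (hρ : HasFreq v a ρ)
    (hrec : Recurrent v) (hbal : Balanced v) (hk : 0 < k)
    (hE : criticalExponent v ≤ ((k + 1 : ℕ) : ℝ≥0∞) / k) : ρ < 1 / k := by
  have hmul : k * ρ ≤ 1 := hρ.mul_le_one_of_nodup <| nodup_factorAt_iff.2 fun i p =>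
    le_of_criticalExponent_le hE
  have hk₀ : (0 : ℝ) < k := by exact_mod_cast hk
  refine lt_of_le_of_ne (by rwa [le_div_iff₀' hk₀]) ?_
  rintro rfl
  exact hρ.irrational (by positivity) hrec hbal (criticalExponent_ne_top_of_le hk hE)
    ⟨1 / k, by simp⟩

lemma HasFreq.lt_add_one_of_returnsAfter [Finite α] {i p : ℕ} {ρ : ℝ} (hρ : HasFreq v (v i) ρ)
    (hrec : Recurrent v) (hbal : Balanced v) (hfin : criticalExponent v ≠ ⊤)
    (hle : ρ ≤ 1 / k) (hp : 0 < p) (h : ReturnsAfter v p i) : k < p + 1 := by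
  by_contra! hpk
  have hk₀ : (0 : ℝ) < k := by exact_mod_cast (Nat.succ_pos p).trans_le hpk
  have hone : 1 ≤ k * ρ := (hbal.one_le_mul_freq_of_returnsAfter hρ hp h).trans <| by
    have := hρ.nonneg
    gcongr
  obtain rfl : ρ = 1 / k := hle.antisymm (by rwa [div_le_iff₀' hk₀])
  exact hρ.irrational (by positivity) hrec hbal hfin ⟨1 / k, by simp⟩

lemma exists_one_div_lt_freq [Fintype α] (hk : 3 ≤ k) (hcard : Fintype.card α ≤ k + 2)
    (hrec : Recurrent v) (hbal : Balanced v)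
    (hE : criticalExponent v ≤ ((k + 1 : ℕ) : ℝ≥0∞) / k) {ρ : α → ℝ}
    (hρ : ∀ a, HasFreq v a (ρ a)) : ∃ a, 1 / ((k : ℝ) + 1) < ρ a := by
  by_contra! hle
  have hfin : criticalExponent v ≠ ⊤ := criticalExponent_ne_top_of_le (by omega) hE
  have hnodup : ∀ i, (factorAt v i (k + 1)).Nodup := nodup_factorAt_iff.2 fun i p hp h =>
    Nat.le_of_lt_succ <| (hρ (v i)).lt_add_one_of_returnsAfter hrec hbal hfin
      (by exact_mod_cast hle (v i)) hp h
  have hv : Pansiot (k + 1 + 1) v := pansiot_of_criticalExponent_le hk hcard hE hnodup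
  obtain ⟨r, q, hq, hr⟩ := hv.exists_arithmetic_progression (by omega) hcard hbal
  exact hfin (criticalExponent_eq_top_of_arithmetic_progression hrec hbal hq hr)

end MaximalFrequency

theorem statement7_general {α : Type*} [Fintype α] [DecidableEq α] (d : ℕ) (hd : 5 ≤ d)
    (hcard : Fintype.card α = d) (v : ℕ → α)
    (hrec : Recurrent v) (hbal : Balanced v)
    (hE : criticalExponent v ≤ ((d - 1 : ℕ) : ℝ≥0∞) / ((d - 2 : ℕ) : ℝ≥0∞)) :
    ∃ ρ : α → ℝ, (∀ a : α, HasFreq v a (ρ a)) ∧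
      ∀ m : ℝ, IsGreatest (Set.range ρ) m →
        1 / ((d : ℝ) - 1) < m ∧ m < 1 / ((d : ℝ) - 2) := by
  obtain ⟨k, rfl⟩ := Nat.exists_eq_add_of_le' (show 2 ≤ d by omega)
  choose ρ hρ using hbal.exists_hasFreq
  refine ⟨ρ, hρ, ?_⟩
  rintro _ ⟨⟨b, rfl⟩, hmax⟩
  push_cast
  rw [show (k : ℝ) + 2 - 1 = k + 1 by ring, add_sub_cancel_right]
  obtain ⟨a, ha⟩ := exists_one_div_lt_freq (by omega) hcard.le hrec hbal hE hρ
  exact ⟨ha.trans_le (hmax ⟨a, rfl⟩),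
    (hρ b).lt_one_div_of_criticalExponent_le hrec hbal (by omega) hE⟩

theorem statement7 {α : Type*} [Fintype α] [DecidableEq α] (d : ℕ) (hd : 11 ≤ d)
    (hcard : Fintype.card α = d) (v : ℕ → α)
    (hrec : Recurrent v) (hbal : Balanced v)
    (hE : criticalExponent v = ((d - 1 : ℕ) : ℝ≥0∞) / ((d - 2 : ℕ) : ℝ≥0∞)) :
    ∃ ρ : α → ℝ, (∀ a : α, HasFreq v a (ρ a)) ∧
      ∀ m : ℝ, IsGreatest (Set.range ρ) m →
        1 / ((d : ℝ) - 1) < m ∧ m < 1 / ((d : ℝ) - 2) :=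
  statement7_general d (by omega) hcard v hrec hbal hE.le

end BalancedCE
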